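/- Let a be real, b > 0, c > 0, α a nonnegative integer, θ ∈ ℝ, and x ∈ (0,1). Then ∫₀ˣ y^{c−1} (1−y)^α ₁F₁(a; b; θy) dy = ∑_{k=0}^{α} (−1)^k binom(α,k) (x^{c+k}/(c+k)) · ₂F₂(a, c+k; b, c+k+1; θx). -/

import Mathlib

open MeasureTheory

/-- The rising factorial `(a)_k = a(a+1)⋯(a+k−1)`, with `(a)_0 = 1`. -/
noncomputable def risingFactorial (a : ℝ) (k : ℕ) : ℝ :=
  ∏ i ∈ Finset.range k, (a + i)

/-- The confluent hypergeometric function `₁F₁(a; b; z) = ∑ (a)_k/((b)_k k!) z^k`. -/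
noncomputable def oneF1 (a b z : ℝ) : ℝ :=
  ∑' k : ℕ, risingFactorial a k / (risingFactorial b k * (k.factorial : ℝ)) * z ^ k

/-- The generalized hypergeometric function
`₂F₂(a₁,a₂;b₁,b₂;z) = ∑ (a₁)_k (a₂)_k/((b₁)_k (b₂)_k k!) z^k`. -/
noncomputable def twoF2 (a₁ a₂ b₁ b₂ z : ℝ) : ℝ :=
  ∑' k : ℕ, risingFactorial a₁ k * risingFactorial a₂ k /
    (risingFactorial b₁ k * risingFactorial b₂ k * (k.factorial : ℝ)) * z ^ k

/-! Against an integrable weight, a series of functions dominated by a summable sequence of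
constants can be integrated term by term. For the weight `y ^ (d - 1)` and the series of
`₁F₁(a; b; θy)`, integrating `y ^ (d + k - 1)` produces the factor `1 / (d + k)`, and
`d / (d + k) = (d)_k / (d + 1)_k` turns the series into a `₂F₂`. The factor `(1 - y) ^ α` is a
polynomial, so the binomial theorem gives a finite combination of such integrals, with
`d = c + k`. -/

theorem hasSum_integral_smul_of_norm_le_summable {α ι 𝕜 E : Type*} [MeasurableSpace α]
    {μ : Measure α} [Countable ι] [NormedRing 𝕜] [NormedAddCommGroup E] [NormedSpace ℝ E]
    [Module 𝕜 E] [IsBoundedSMul 𝕜 E] {g : α → 𝕜} {f : ι → α → E} {F : α → E} {B : ι → ℝ}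
    (hg : Integrable g μ) (hf : ∀ i, AEStronglyMeasurable (f i) μ)
    (hfB : ∀ i, ∀ᵐ a ∂μ, ‖f i a‖ ≤ B i) (hB : Summable B)
    (hF : ∀ᵐ a ∂μ, HasSum (fun i => f i a) (F a)) :
    HasSum (fun i => ∫ a, g a • f i a ∂μ) (∫ a, g a • F a ∂μ) := by
  refine hasSum_integral_of_dominated_convergence (fun i a => ‖g a‖ * B i)
    (fun i => hg.aestronglyMeasurable.smul (hf i)) (fun i => ?_)
    (.of_forall fun a => hB.mul_left _) ?_ ?_
  · filter_upwards [hfB i] with a ha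
    exact (norm_smul_le _ _).trans (by gcongr)
  · simpa only [tsum_mul_left] using hg.norm.mul_const _
  · filter_upwards [hF] with a ha
    exact ha.const_smul _

theorem continuous_tsum_mul_pow {𝕜 : Type*} [RCLike 𝕜] {u : ℕ → 𝕜}
    (hu : ∀ z : 𝕜, Summable fun k => u k * z ^ k) :
    Continuous fun z => ∑' k, u k * z ^ k := by
  refine continuous_iff_continuousAt.2 fun z₀ => ?_
  obtain ⟨R, hR⟩ := exists_gt ‖z₀‖
  have hbound : ∀ k, ∀ z ∈ Metric.ball (0 : 𝕜) R, ‖u k * z ^ k‖ ≤ ‖u k * (R : 𝕜) ^ k‖ := by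
    intro k z hz
    rw [norm_mul, norm_mul, norm_pow, norm_pow]
    gcongr
    have hzR : ‖z‖ < R := mem_ball_zero_iff.1 hz
    rw [RCLike.norm_of_nonneg ((norm_nonneg z).trans hzR.le)]
    exact hzR.le
  have hcont : ContinuousOn (fun z => ∑' k, u k * z ^ k) (Metric.ball 0 R) :=
    continuousOn_tsum (fun k => by fun_prop) (hu R).norm hbound
  exact hcont.continuousAt (Metric.isOpen_ball.mem_nhds (mem_ball_zero_iff.2 hR))

theorem risingFactorial_succ (a : ℝ) (k : ℕ) :
    risingFactorial a (k + 1) = risingFactorial a k * (a + k) :=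
  Finset.prod_range_succ _ _

theorem risingFactorial_succ_left (a : ℝ) (k : ℕ) :
    risingFactorial a (k + 1) = a * risingFactorial (a + 1) k := by
  rw [risingFactorial, Finset.prod_range_succ', mul_comm, Nat.cast_zero, add_zero, risingFactorial]
  simp only [Nat.cast_succ, add_assoc, add_comm (1 : ℝ)]

theorem risingFactorial_pos {a : ℝ} (ha : 0 < a) (k : ℕ) : 0 < risingFactorial a k :=
  Finset.prod_pos fun _ _ => by positivity

theorem risingFactorial_div_risingFactorial_add_one {d : ℝ} (hd : 0 < d) (k : ℕ) :
    risingFactorial d k / risingFactorial (d + 1) k = d / (d + k) := by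
  have hpos : 0 < risingFactorial (d + 1) k := risingFactorial_pos (by positivity) k
  rw [div_eq_div_iff hpos.ne' (by positivity), ← risingFactorial_succ, risingFactorial_succ_left]

section OneF1

/-- The coefficient `(a)_k / ((b)_k k!)` of `z ^ k` in `₁F₁(a; b; z)`. It inherits from the
definition of `oneF1` the junk value `0` for `k > n` when `b = -n` with `n : ℕ`. -/
noncomputable def oneF1Coeff (a b : ℝ) (k : ℕ) : ℝ :=
  risingFactorial a k / (risingFactorial b k * (k.factorial : ℝ))

variable (a b : ℝ)

theorem oneF1_eq_tsum (z : ℝ) : oneF1 a b z = ∑' k, oneF1Coeff a b k * z ^ k :=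
  rfl

theorem oneF1Coeff_succ (k : ℕ) :
    oneF1Coeff a b (k + 1) = (a + k) / (b + k) * (1 / (k + 1)) * oneF1Coeff a b k := by
  simp only [oneF1Coeff, risingFactorial_succ, Nat.factorial_succ, Nat.cast_mul, Nat.cast_succ,
    div_eq_mul_inv, mul_inv]
  ring

theorem summable_oneF1Coeff_mul_pow (z : ℝ) : Summable fun k => oneF1Coeff a b k * z ^ k := by
  have hratio : Filter.Tendsto (fun k : ℕ => (a + k) / (b + k) * (1 / ((k : ℝ) + 1)) * z)
      Filter.atTop (nhds 0) := by
    have hquot := tendsto_add_mul_div_add_mul_atTop_nhds a b 1 (one_ne_zero (α := ℝ))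
    simpa using (hquot.mul tendsto_one_div_add_atTop_nhds_zero_nat).mul_const z
  refine summable_of_ratio_norm_eventually_le (r := 1 / 2) (by norm_num) ?_
  filter_upwards [hratio.norm.eventually_le_const (u := 1 / 2) (by norm_num)] with k hk
  have hstep : oneF1Coeff a b (k + 1) * z ^ (k + 1) =
      (a + k) / (b + k) * (1 / ((k : ℝ) + 1)) * z * (oneF1Coeff a b k * z ^ k) := by
    rw [oneF1Coeff_succ]
    ring
  rw [hstep, norm_mul]
  gcongr

theorem continuous_oneF1 : Continuous (oneF1 a b) :=
  continuous_tsum_mul_pow (summable_oneF1Coeff_mul_pow a b)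

theorem twoF2_add_one_eq_tsum {d : ℝ} (hd : 0 < d) (z : ℝ) :
    twoF2 a d b (d + 1) z = ∑' k : ℕ, d / (d + k) * (oneF1Coeff a b k * z ^ k) := by
  refine tsum_congr fun k => ?_
  rw [← risingFactorial_div_risingFactorial_add_one hd, oneF1Coeff]
  simp only [div_eq_mul_inv, mul_inv]
  ring

end OneF1

section Integral

variable {d x : ℝ}

theorem integrableOn_rpow_sub_one (hd : 0 < d) (hx : 0 ≤ x) :
    IntegrableOn (fun y : ℝ => y ^ (d - 1)) (Set.Ioc 0 x) :=
  (intervalIntegrable_iff_integrableOn_Ioc_of_le hx).1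
    (intervalIntegral.intervalIntegrable_rpow' (by linarith))

theorem rpow_sub_one_mul_pow (d : ℝ) {y : ℝ} (hy : 0 < y) (k : ℕ) :
    y ^ (d - 1) * y ^ k = y ^ (d + k - 1) := by
  rw [← Real.rpow_add_natCast hy.ne', sub_add_eq_add_sub]

theorem integral_rpow_sub_one_mul_pow (hd : 0 < d) (hx : 0 ≤ x) (k : ℕ) :
    ∫ y in Set.Ioc 0 x, y ^ (d - 1) * y ^ k = x ^ d * x ^ k / (d + k) := by
  have hdk : 0 < d + k := by positivity
  rw [setIntegral_congr_fun measurableSet_Ioc fun y hy => rpow_sub_one_mul_pow d hy.1 k,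
    ← intervalIntegral.integral_of_le hx, integral_rpow (Or.inl (by linarith)), sub_add_cancel,
    Real.zero_rpow hdk.ne', sub_zero, Real.rpow_add' hx hdk.ne', Real.rpow_natCast]

variable (a b θ : ℝ)

theorem integrableOn_rpow_sub_one_mul_oneF1 (hd : 0 < d) (hx : 0 ≤ x) :
    IntegrableOn (fun y => y ^ (d - 1) * oneF1 a b (θ * y)) (Set.Ioc 0 x) :=
  (integrableOn_rpow_sub_one hd hx).mul_continuousOn_of_subset
    ((continuous_oneF1 a b).comp (continuous_const_mul θ)).continuousOn measurableSet_Ioc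
    isCompact_Icc Set.Ioc_subset_Icc_self

theorem integral_rpow_sub_one_mul_oneF1 (hd : 0 < d) (hx : 0 ≤ x) :
    ∫ y in Set.Ioc 0 x, y ^ (d - 1) * oneF1 a b (θ * y) =
      x ^ d / d * twoF2 a d b (d + 1) (θ * x) := by
  have hbound : ∀ k, ∀ᵐ y ∂volume.restrict (Set.Ioc 0 x),
      ‖oneF1Coeff a b k * (θ * y) ^ k‖ ≤ ‖oneF1Coeff a b k * (θ * x) ^ k‖ := by
    refine fun k => ae_restrict_of_forall_mem measurableSet_Ioc fun y hy => ?_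
    simp only [norm_mul, norm_pow, Real.norm_of_nonneg hy.1.le, Real.norm_of_nonneg hx]
    have := hy.1.le
    gcongr
    exact hy.2
  have hsum := hasSum_integral_smul_of_norm_le_summable (integrableOn_rpow_sub_one hd hx)
    (fun k => by fun_prop) hbound (summable_oneF1Coeff_mul_pow a b (θ * x)).norm
    (.of_forall fun y => (summable_oneF1Coeff_mul_pow a b (θ * y)).hasSum)
  simp only [smul_eq_mul, ← oneF1_eq_tsum] at hsum
  rw [← hsum.tsum_eq, twoF2_add_one_eq_tsum a b hd, ← tsum_mul_left]
  refine tsum_congr fun k => ?_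
  calc ∫ y in Set.Ioc 0 x, y ^ (d - 1) * (oneF1Coeff a b k * (θ * y) ^ k)
      = oneF1Coeff a b k * θ ^ k * ∫ y in Set.Ioc 0 x, y ^ (d - 1) * y ^ k := by
        rw [← integral_const_mul]
        congr with y
        ring
    _ = x ^ d / d * (d / (d + k) * (oneF1Coeff a b k * (θ * x) ^ k)) := by
        rw [integral_rpow_sub_one_mul_pow hd hx, mul_pow]
        field_simp

end Integral

theorem one_sub_pow_eq_sum {R : Type*} [CommRing R] (y : R) (n : ℕ) :
    (1 - y) ^ n = ∑ k ∈ Finset.range (n + 1), (-1) ^ k * (n.choose k : R) * y ^ k := by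
  rw [sub_eq_neg_add, add_pow]
  refine Finset.sum_congr rfl fun k _ => ?_
  rw [neg_pow, one_pow]
  ring

theorem rpow_sub_one_mul_one_sub_pow (c : ℝ) (α : ℕ) {y : ℝ} (hy : 0 < y) :
    y ^ (c - 1) * (1 - y) ^ α =
      ∑ k ∈ Finset.range (α + 1), (-1 : ℝ) ^ k * (α.choose k : ℝ) * y ^ (c + k - 1) := by
  rw [one_sub_pow_eq_sum, Finset.mul_sum]
  refine Finset.sum_congr rfl fun k _ => ?_
  rw [← rpow_sub_one_mul_pow c hy]
  ring

theorem phi_closed_form_general (a b c : ℝ) (_hb : ∀ n : ℕ, b ≠ -n) (hc : 0 < c)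
    (α : ℕ) (θ : ℝ) (x : ℝ) (hx : 0 ≤ x) :
    (∫ y in Set.Ioc (0 : ℝ) x, y ^ (c - 1) * (1 - y) ^ α * oneF1 a b (θ * y))
      = ∑ k ∈ Finset.range (α + 1),
          (-1 : ℝ) ^ k * (α.choose k : ℝ) * (x ^ (c + k) / (c + k)) *
            twoF2 a (c + k) b (c + k + 1) (θ * x) := by
  have hck (k : ℕ) : 0 < c + k := by positivity
  have hexpand : Set.EqOn (fun y => y ^ (c - 1) * (1 - y) ^ α * oneF1 a b (θ * y))
      (fun y => ∑ k ∈ Finset.range (α + 1),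
        (-1 : ℝ) ^ k * (α.choose k : ℝ) * (y ^ (c + k - 1) * oneF1 a b (θ * y)))
      (Set.Ioc 0 x) := fun y hy => by
    simp only [rpow_sub_one_mul_one_sub_pow c α hy.1, Finset.sum_mul, mul_assoc]
  rw [setIntegral_congr_fun measurableSet_Ioc hexpand, integral_finsetSum _ fun k _ =>
    (integrableOn_rpow_sub_one_mul_oneF1 a b θ (hck k) hx).const_mul _]
  refine Finset.sum_congr rfl fun k _ => ?_
  rw [integral_const_mul, integral_rpow_sub_one_mul_oneF1 a b θ (hck k) hx, ← mul_assoc]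

/-- Closed form of `φ_i(x,θ)`:
`∫₀ˣ y^{c−1}(1−y)^α ₁F₁(a;b;θy) dy
  = ∑_{k=0}^α (−1)^k C(α,k) (x^{c+k}/(c+k)) ₂F₂(a, c+k; b, c+k+1; θx)`. -/
theorem phi_closed_form (a b c : ℝ) (hb : 0 < b) (hc : 0 < c)
    (α : ℕ) (θ : ℝ) (x : ℝ) (hx : x ∈ Set.Ioo (0 : ℝ) 1) :
    (∫ y in Set.Ioc (0 : ℝ) x, y ^ (c - 1) * (1 - y) ^ α * oneF1 a b (θ * y))
      = ∑ k ∈ Finset.range (α + 1),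
          (-1 : ℝ) ^ k * (α.choose k : ℝ) * (x ^ (c + k) / (c + k)) *
            twoF2 a (c + k) b (c + k + 1) (θ * x) :=
  have hb' (n : ℕ) : b ≠ -n := ((neg_nonpos.2 n.cast_nonneg).trans_lt hb).ne'
  phi_closed_form_general a b c hb' hc α θ x hx.1.le
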